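/- arXiv:1203.3168 — 2 statements merged into one kernel-verified Lean document; each statement's English description precedes it below -/
import Mathlib

section
/- For an alternating (2n+1)×(2n+1) matrix φ over a commutative ring, the adjugate (classical adjoint) of φ equals Y·Yᵀ, where Y_i = (-1)^{i+1} Pf(φ(i)); in particular every entry of adj(φ) is a product of two signed principal Pfaffians of size 2n. -/
/-!
The adjugate formula in size `2n + 1` is proved together with Cayley's identity `det = Pf ^ 2` in
size `2n`, by induction. Expanding both sides along the first row and column turns the adjugate
formula in size `2n + 1` into Cayley's identity in size `2n + 2`: the determinant becomes a
quadratic form in the first row whose matrix is the adjugate of the remaining block, and the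
Pfaffian a linear form.

Conversely, it suffices to treat the generic alternating matrix of size `2n + 1`, which lives over
a domain of characteristic zero. Its determinant vanishes, so its adjugate is symmetric of rank at
most one, with diagonal entries the squares `Y i ^ 2` by Cayley's identity in size `2n`. Hence its
`(i, j)` entry is `Y i * Y j` up to sign. The sign is read off at the specialization whose entries
above the diagonal are all `1`, where the kernel is spanned by the vector `1, -1, 1, …, 1`.
-/

open Finset in
/-- The set of permutations of `Fin (2*n)` giving normalized perfect matchings. -/
noncomputable def pfPerms (n : ℕ) : Finset (Equiv.Perm (Fin (2*n))) :=
  Finset.univ.filter (fun σ =>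
    (∀ i : Fin n, σ ⟨2*i, by omega⟩ < σ ⟨2*i+1, by omega⟩) ∧
    (∀ i j : Fin n, i < j → σ ⟨2*(i:ℕ), by omega⟩ < σ ⟨2*(j:ℕ), by omega⟩))

/-- The Pfaffian of a `2n × 2n` matrix, as the signed sum over perfect matchings. -/
noncomputable def pfaffian {R : Type*} [CommRing R] {n : ℕ}
    (A : Matrix (Fin (2*n)) (Fin (2*n)) R) : R :=
  ∑ σ ∈ pfPerms n, (Equiv.Perm.sign σ : ℤ) •
    ∏ i : Fin n, A (σ ⟨2*i, by omega⟩) (σ ⟨2*i+1, by omega⟩)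

variable {R : Type*} [CommRing R]

open Equiv Function
open scoped Matrix

section ConsPerm

variable {m : ℕ} {j : Fin (m + 1)} {τ : Perm (Fin m)}

/-- The permutation of `Fin (m + 1)` with first value `j` whose remaining values are in the same
relative order as those of `τ`; the pair `(j, τ)` determines it uniquely. -/
def consPerm (j : Fin (m + 1)) (τ : Perm (Fin m)) : Perm (Fin (m + 1)) :=
  j.cycleRange.symm * Perm.decomposeFin.symm (0, τ)

@[simp]
lemma consPerm_zero : consPerm j τ 0 = j := by
  simp [consPerm]

@[simp]
lemma consPerm_succ (k : Fin m) : consPerm j τ k.succ = j.succAbove (τ k) := by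
  simp [consPerm]

lemma sign_consPerm : Perm.sign (consPerm j τ) = (-1) ^ (j : ℕ) * Perm.sign τ := by
  simp [consPerm, Perm.sign_mul]

lemma consPerm_inj {j' : Fin (m + 1)} {τ' : Perm (Fin m)} :
    consPerm j τ = consPerm j' τ' ↔ j = j' ∧ τ = τ' := by
  refine ⟨fun h => ?_, by rintro ⟨rfl, rfl⟩; rfl⟩
  obtain rfl : j = j' := by simpa only [consPerm_zero] using Perm.congr_fun h 0
  refine ⟨rfl, Perm.ext fun k => Fin.succAbove_right_injective (p := j) ?_⟩
  simpa only [consPerm_succ] using Perm.congr_fun h k.succ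

lemma exists_consPerm_eq (σ : Perm (Fin (m + 1))) : ∃ j τ, consPerm j τ = σ := by
  have hbij : Bijective fun p : Fin (m + 1) × Perm (Fin m) => consPerm p.1 p.2 :=
    (Fintype.bijective_iff_injective_and_card _).2
      ⟨fun _ _ h => Prod.ext_iff.2 (consPerm_inj.1 h),
        by simp [Fintype.card_perm, Nat.factorial_succ]⟩
  obtain ⟨⟨j, τ⟩, hσ⟩ := hbij.surjective σ
  exact ⟨j, τ, hσ⟩

end ConsPerm

section ConsPair

variable {m : ℕ} {j : Fin (m + 1)} {τ : Perm (Fin m)}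

/-- The permutation of `Fin (m + 2)` starting with the values `0, j.succ` whose remaining values
are in the same relative order as those of `τ`. When `τ` lists the pairs of a perfect matching, this
adjoins the pair `{0, j.succ}` to it. -/
def consPair (j : Fin (m + 1)) (τ : Perm (Fin m)) : Perm (Fin (m + 2)) :=
  consPerm 0 (consPerm j τ)

lemma consPair_zero : consPair j τ 0 = 0 :=
  consPerm_zero

lemma consPair_one : consPair j τ 1 = j.succ := by
  rw [consPair, ← Fin.succ_zero_eq_one, consPerm_succ, consPerm_zero, Fin.succAbove_zero]

lemma consPair_succ_succ (k : Fin m) : consPair j τ k.succ.succ = (j.succAbove (τ k)).succ := by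
  rw [consPair, consPerm_succ, consPerm_succ, Fin.succAbove_zero]

lemma consPair_zero_lt_succ (k : Fin (m + 1)) : consPair j τ 0 < consPair j τ k.succ := by
  rw [consPair_zero, consPair, consPerm_succ, Fin.succAbove_zero]
  exact Fin.succ_pos _

lemma consPair_succ_succ_lt_iff {k l : Fin m} :
    consPair j τ k.succ.succ < consPair j τ l.succ.succ ↔ τ k < τ l := by
  simp only [consPair_succ_succ, Fin.succ_lt_succ_iff, Fin.succAbove_lt_succAbove_iff]

lemma sign_consPair : Perm.sign (consPair j τ) = (-1) ^ (j : ℕ) * Perm.sign τ := by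
  simp only [consPair, sign_consPerm, Fin.val_zero, pow_zero, one_mul]

lemma consPair_inj {j' : Fin (m + 1)} {τ' : Perm (Fin m)} :
    consPair j τ = consPair j' τ' ↔ j = j' ∧ τ = τ' := by
  simp only [consPair, consPerm_inj, true_and]

lemma exists_consPair_eq {σ : Perm (Fin (m + 2))} (hσ : σ 0 = 0) : ∃ j τ, consPair j τ = σ := by
  obtain ⟨i, ρ, rfl⟩ := exists_consPerm_eq σ
  obtain ⟨j, τ, rfl⟩ := exists_consPerm_eq ρ
  obtain rfl : i = 0 := consPerm_zero.symm.trans hσ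
  exact ⟨j, τ, rfl⟩

end ConsPair

section PfaffianExpansion

variable {n : ℕ}

lemma apply_zero_of_mem_pfPerms {σ : Perm (Fin (2 * n + 2))} (hσ : σ ∈ pfPerms (n + 1)) :
    σ 0 = 0 := by
  simp only [pfPerms, Finset.mem_filter, Finset.mem_univ, true_and] at hσ
  obtain ⟨hpair, hfirst⟩ := hσ
  obtain ⟨⟨p, hp⟩, hσp⟩ := σ.surjective 0
  have not_lt (x) : ¬ σ x < σ ⟨p, hp⟩ := hσp ▸ Fin.not_lt_zero _
  obtain ⟨i, rfl | rfl⟩ := p.even_or_odd'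
  · rcases i.eq_zero_or_pos with rfl | hi
    · exact hσp
    · exact absurd (hfirst ⟨0, by omega⟩ ⟨i, by omega⟩ hi) (not_lt _)
  · exact absurd (hpair ⟨i, by omega⟩) (not_lt _)

lemma consPair_mem_pfPerms_iff {j : Fin (2 * n + 1)} {τ : Perm (Fin (2 * n))} :
    consPair j τ ∈ pfPerms (n + 1) ↔ τ ∈ pfPerms n := by
  simp only [pfPerms, Finset.mem_filter, Finset.mem_univ, true_and]
  constructor
  · rintro ⟨hpair, hfirst⟩
    exact ⟨fun i => consPair_succ_succ_lt_iff.1 (hpair i.succ), fun i k hik =>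
      consPair_succ_succ_lt_iff.1 (hfirst i.succ k.succ (Fin.succ_lt_succ_iff.2 hik))⟩
  · rintro ⟨hpair, hfirst⟩
    refine ⟨Fin.cases (consPair_zero_lt_succ 0) fun i => ?_,
      Fin.cases (fun k hk => ?_) fun i => Fin.cases (by simp) fun k hik => ?_⟩
    · exact consPair_succ_succ_lt_iff (k := ⟨2 * i, by omega⟩) (l := ⟨2 * i + 1, by omega⟩).2
        (hpair i)
    · obtain ⟨k, rfl⟩ := Fin.exists_succ_eq.2 hk.ne'
      exact consPair_zero_lt_succ (Fin.succ ⟨2 * k, by omega⟩)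
    · exact consPair_succ_succ_lt_iff (k := ⟨2 * i, by omega⟩) (l := ⟨2 * k, by omega⟩).2
        (hfirst i k (Fin.succ_lt_succ_iff.1 hik))

lemma sum_pfPerms_succ {M : Type*} [AddCommMonoid M] (f : Perm (Fin (2 * n + 2)) → M) :
    ∑ σ ∈ pfPerms (n + 1), f σ = ∑ j, ∑ τ ∈ pfPerms n, f (consPair j τ) := by
  rw [← Finset.sum_product']
  symm
  refine Finset.sum_bij (fun p _ => consPair p.1 p.2) ?_ ?_ ?_ fun _ _ => rfl
  · exact fun p hp => consPair_mem_pfPerms_iff.2 (Finset.mem_product.1 hp).2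
  · exact fun p _ q _ h => Prod.ext_iff.2 (consPair_inj.1 h)
  · intro σ hσ
    obtain ⟨j, τ, rfl⟩ := exists_consPair_eq (apply_zero_of_mem_pfPerms hσ)
    exact ⟨(j, τ),
      Finset.mem_product.2 ⟨Finset.mem_univ _, consPair_mem_pfPerms_iff.1 hσ⟩, rfl⟩

lemma prod_consPair {M : Type*} [CommMonoid M] (A : Matrix (Fin (2 * n + 2)) (Fin (2 * n + 2)) M)
    (j : Fin (2 * n + 1)) (τ : Perm (Fin (2 * n))) :
    ∏ i : Fin (n + 1), A (consPair j τ ⟨2 * i, by omega⟩) (consPair j τ ⟨2 * i + 1, by omega⟩) =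
      A 0 j.succ * ∏ i : Fin n,
        (A.submatrix Fin.succ Fin.succ).submatrix j.succAbove j.succAbove
          (τ ⟨2 * i, by omega⟩) (τ ⟨2 * i + 1, by omega⟩) := by
  rw [Fin.prod_univ_succ]
  refine congrArg₂ _ (congrArg₂ A consPair_zero consPair_one) (Finset.prod_congr rfl fun i _ => ?_)
  exact congrArg₂ A (consPair_succ_succ ⟨2 * i, by omega⟩)
    (consPair_succ_succ ⟨2 * i + 1, by omega⟩)

/-- The vector of Pfaffians of the principal submatrices of size `2 * n` of a matrix of size
`2 * n + 1`, with alternating signs starting from `+` in index `0`. -/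
noncomputable def signedPfaffians (A : Matrix (Fin (2 * n + 1)) (Fin (2 * n + 1)) R) :
    Fin (2 * n + 1) → R :=
  fun i => (-1) ^ (i : ℕ) * pfaffian (A.submatrix i.succAbove i.succAbove)

lemma pfaffian_succ (A : Matrix (Fin (2 * n + 2)) (Fin (2 * n + 2)) R) :
    pfaffian (n := n + 1) A =
      (fun j => A 0 j.succ) ⬝ᵥ signedPfaffians (A.submatrix Fin.succ Fin.succ) := by
  refine (sum_pfPerms_succ _).trans (Finset.sum_congr rfl fun j _ => ?_)
  rw [signedPfaffians, pfaffian, Finset.mul_sum, Finset.mul_sum]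
  refine Finset.sum_congr rfl fun τ _ => ?_
  rw [prod_consPair, sign_consPair]
  simp only [zsmul_eq_mul]
  push_cast
  ring

lemma pfaffian_map {S : Type*} [CommRing S] (f : R →+* S)
    (A : Matrix (Fin (2 * n)) (Fin (2 * n)) R) : pfaffian (A.map f) = f (pfaffian A) := by
  simp only [pfaffian, Matrix.map_apply, map_sum, map_zsmul, map_prod]

lemma signedPfaffians_map {S : Type*} [CommRing S] (f : R →+* S)
    (A : Matrix (Fin (2 * n + 1)) (Fin (2 * n + 1)) R) (i : Fin (2 * n + 1)) :
    signedPfaffians (A.map f) i = f (signedPfaffians A i) := by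
  simp only [signedPfaffians, Matrix.submatrix_map, pfaffian_map, map_mul, map_pow, map_neg,
    map_one]

end PfaffianExpansion

section Adjugate

lemma det_succ_eq_sub_dotProduct_adjugate_mulVec {m : ℕ}
    (A : Matrix (Fin (m + 1)) (Fin (m + 1)) R) :
    A.det = A 0 0 * (A.submatrix Fin.succ Fin.succ).det -
      (fun j => A 0 (Fin.succ j)) ⬝ᵥ
        (A.submatrix Fin.succ Fin.succ).adjugate *ᵥ fun i => A (Fin.succ i) 0 := by
  cases m with
  | zero => simp
  | succ m =>
    have expand_column (j : Fin (m + 1)) :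
        (-1) ^ (j : ℕ) * (A.submatrix Fin.succ j.succ.succAbove).det =
          ((A.submatrix Fin.succ Fin.succ).adjugate *ᵥ fun i => A (Fin.succ i) 0) j := by
      have hcomp : j.succ.succAbove ∘ Fin.succ = Fin.succ ∘ j.succAbove :=
        funext (Fin.succ_succAbove_succ j)
      rw [Matrix.det_succ_column_zero, Matrix.mulVec, dotProduct, Finset.mul_sum]
      refine Finset.sum_congr rfl fun i _ => ?_
      rw [Matrix.adjugate_fin_succ_eq_det_submatrix, Matrix.submatrix_submatrix,
        Matrix.submatrix_submatrix, hcomp, Matrix.submatrix_apply, Fin.succ_succAbove_zero]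
      ring
    rw [Matrix.det_succ_row_zero, Fin.sum_univ_succ, dotProduct, sub_eq_add_neg,
      ← Finset.sum_neg_distrib]
    simp only [← expand_column, Fin.val_zero, Fin.val_succ, Fin.succAbove_zero]
    ring_nf

variable {m : Type*} [Fintype m] [DecidableEq m]

lemma det_eq_zero_of_transpose_eq_neg [IsAddTorsionFree R] {A : Matrix m m R}
    (hA : Aᵀ = -A) (hm : Odd (Fintype.card m)) : A.det = 0 := by
  have hdet : A.det = -A.det := by
    rw [← neg_one_mul, ← hm.neg_one_pow, ← Matrix.det_neg, ← hA, Matrix.det_transpose]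
  exact self_eq_neg.1 hdet

lemma adjugate_isSymm_of_transpose_eq_neg {A : Matrix m m R}
    (hA : Aᵀ = -A) (hm : Odd (Fintype.card m)) : A.adjugate.IsSymm := by
  rw [Matrix.IsSymm, Matrix.adjugate_transpose, hA, ← neg_one_smul R A, Matrix.adjugate_smul,
    (Nat.Odd.sub_odd hm odd_one).neg_one_pow, one_smul]

lemma adjugate_map_apply {S : Type*} [CommRing S] (f : R →+* S) (A : Matrix m m R) (i j : m) :
    (A.map f).adjugate i j = f (A.adjugate i j) :=
  (congrFun₂ (RingHom.map_adjugate f A) i j).symm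

variable [IsDomain R] {A : Matrix m m R}

-- Replacing row `j` of `A` by `v k • eᵢ - v i • eₖ` leaves `v` in the kernel, and the determinant
-- of the resulting matrix is the difference of the two sides.
lemma adjugate_mul_comm_of_mulVec_eq_zero {v : m → R} (hv : A *ᵥ v = 0) (i j k : m) :
    A.adjugate i j * v k = A.adjugate k j * v i := by
  rcases eq_or_ne v 0 with rfl | hv0
  · simp
  set b : m → R := v k • Pi.single i 1 - v i • Pi.single k 1 with hb
  have hdet : (A.updateRow j b).det = 0 := by
    refine Matrix.exists_mulVec_eq_zero_iff.1 ⟨v, hv0, ?_⟩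
    have hbv : b ⬝ᵥ v = 0 := by simp [hb, sub_dotProduct, mul_comm]
    rw [Matrix.updateRow_mulVec, hv, hbv]
    simp
  rw [← Matrix.cramer_transpose_apply, hb, map_sub, map_smul, map_smul] at hdet
  simp only [Pi.sub_apply, Pi.smul_apply, Matrix.cramer_transpose_apply, ← Matrix.adjugate_apply,
    smul_eq_mul] at hdet
  linear_combination hdet

lemma adjugate_mul_comm_of_det_eq_zero (hA : A.det = 0) (i j k l : m) :
    A.adjugate i j * A.adjugate k l = A.adjugate k j * A.adjugate i l :=
  adjugate_mul_comm_of_mulVec_eq_zero (v := fun k => A.adjugate k l)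
    (funext fun i => (congrFun₂ (Matrix.mul_adjugate A) i l).trans (by simp [hA])) i j k

lemma adjugate_apply_sq_of_transpose_eq_neg [IsAddTorsionFree R] (hA : Aᵀ = -A)
    (hm : Odd (Fintype.card m)) (i j : m) :
    A.adjugate i j ^ 2 = A.adjugate i i * A.adjugate j j := by
  have hsymm : A.adjugate j i = A.adjugate i j :=
    (adjugate_isSymm_of_transpose_eq_neg hA hm).apply i j
  calc A.adjugate i j ^ 2 = A.adjugate i j * A.adjugate j i := by rw [hsymm, sq]
    _ = A.adjugate j j * A.adjugate i i :=
      adjugate_mul_comm_of_det_eq_zero (det_eq_zero_of_transpose_eq_neg hA hm) i j j i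
    _ = A.adjugate i i * A.adjugate j j := mul_comm _ _

end Adjugate

section Alternating

/-- A square matrix is alternating if it is skew-symmetric with zero diagonal; over a ring in which
`2` is a zero divisor the second condition does not follow from the first. -/
structure IsAlternating {m : Type*} (A : Matrix m m R) : Prop where
  transpose_eq_neg : Aᵀ = -A
  diag_eq_zero (i : m) : A i i = 0

variable {m k : Type*} {A : Matrix m m R}

lemma IsAlternating.apply_swap (hA : IsAlternating A) (i j : m) : A i j = -A j i :=
  congrFun₂ hA.transpose_eq_neg j i

lemma IsAlternating.submatrix (hA : IsAlternating A) (f : k → m) :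
    IsAlternating (A.submatrix f f) where
  transpose_eq_neg := by rw [Matrix.transpose_submatrix, hA.transpose_eq_neg]; rfl
  diag_eq_zero i := hA.diag_eq_zero (f i)

end Alternating

section UpperOnes

/-- The alternating integer matrix all of whose entries above the diagonal are `1`. -/
def upperOnes (m : ℕ) : Matrix (Fin m) (Fin m) ℤ :=
  Matrix.of fun i j => if i < j then 1 else if j < i then -1 else 0

lemma isAlternating_upperOnes (m : ℕ) : IsAlternating (upperOnes m) where
  transpose_eq_neg := by
    ext i j
    simp only [upperOnes, Matrix.transpose_apply, Matrix.of_apply, Matrix.neg_apply]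
    split_ifs <;> omega
  diag_eq_zero i := by simp [upperOnes]

lemma upperOnes_submatrix {m k : ℕ} {f : Fin k → Fin m} (hf : StrictMono f) :
    (upperOnes m).submatrix f f = upperOnes k := by
  ext i j
  simp [upperOnes, hf.lt_iff_lt]

lemma upperOnes_mulVec_neg_one_pow (m : ℕ) (i : Fin m) :
    (upperOnes m *ᵥ fun j => (-1) ^ (j : ℕ)) i = if Even m then -1 else 0 := by
  induction m with
  | zero => exact i.elim0
  | succ m ih =>
    rw [Matrix.mulVec, dotProduct, Fin.sum_univ_succ]
    cases i using Fin.cases with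
    | zero =>
      by_cases hm : Even m <;>
        simp [upperOnes, pow_succ, Fin.sum_neg_one_pow, Nat.even_add_one, -Nat.not_even_iff_odd, hm]
    | succ i =>
      have hsum : ∑ j : Fin m, upperOnes (m + 1) i.succ j.succ * (-1) ^ (j.succ : ℕ) =
          -(upperOnes m *ᵥ fun j => (-1) ^ (j : ℕ)) i := by
        rw [← upperOnes_submatrix (k := m) Fin.strictMono_succ, Matrix.mulVec, dotProduct,
          ← Finset.sum_neg_distrib]
        exact Finset.sum_congr rfl fun j _ => by rw [Matrix.submatrix_apply, Fin.val_succ]; ring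
      rw [hsum, ih]
      by_cases hm : Even m <;> simp [upperOnes, Nat.even_add_one, -Nat.not_even_iff_odd, hm]

lemma pfaffian_upperOnes (n : ℕ) : pfaffian (upperOnes (2 * n)) = 1 := by
  induction n with
  | zero => simp [pfaffian, pfPerms]
  | succ n ih =>
    refine (pfaffian_succ (upperOnes (2 * n + 2))).trans ?_
    simp only [dotProduct, signedPfaffians, upperOnes_submatrix Fin.strictMono_succ,
      upperOnes_submatrix (Fin.strictMono_succAbove _), ih]
    simp [upperOnes, Fin.sum_neg_one_pow]

lemma signedPfaffians_upperOnes (n : ℕ) :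
    signedPfaffians (upperOnes (2 * n + 1)) = fun i : Fin (2 * n + 1) => (-1) ^ (i : ℕ) := by
  funext i
  rw [signedPfaffians, upperOnes_submatrix (Fin.strictMono_succAbove i), pfaffian_upperOnes,
    mul_one]

end UpperOnes

section Generic

/-- The alternating matrix whose entries above the diagonal are independent indeterminates over
`ℤ`: every alternating matrix is a specialization of it. -/
noncomputable def genericAlternating (m : ℕ) :
    Matrix (Fin m) (Fin m) (MvPolynomial (Fin m × Fin m) ℤ) :=
  Matrix.of fun i j =>
    if i < j then MvPolynomial.X (i, j) else if j < i then -MvPolynomial.X (j, i) else 0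

lemma isAlternating_genericAlternating (m : ℕ) : IsAlternating (genericAlternating m) where
  transpose_eq_neg := by
    ext1 i j
    simp only [genericAlternating, Matrix.transpose_apply, Matrix.of_apply, Matrix.neg_apply]
    split_ifs <;> first | omega | simp
  diag_eq_zero i := by simp [genericAlternating]

lemma IsAlternating.exists_map_genericAlternating_eq {m : ℕ} {A : Matrix (Fin m) (Fin m) R}
    (hA : IsAlternating A) :
    ∃ f : MvPolynomial (Fin m × Fin m) ℤ →+* R, (genericAlternating m).map f = A := by
  refine ⟨MvPolynomial.eval₂Hom (Int.castRingHom R) fun p => A p.1 p.2, ?_⟩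
  ext i j
  rcases lt_trichotomy i j with h | rfl | h
  · simp [genericAlternating, h]
  · simp [genericAlternating, hA.diag_eq_zero]
  · simp [genericAlternating, h, h.not_gt, hA.apply_swap i j]

end Generic

section Cayley

variable {n : ℕ}

lemma IsAlternating.det_eq_pfaffian_sq_of_adjugate_eq
    {A : Matrix (Fin (2 * n + 2)) (Fin (2 * n + 2)) R} (hA : IsAlternating A)
    (hadj : (A.submatrix Fin.succ Fin.succ).adjugate =
      Matrix.vecMulVec (signedPfaffians (A.submatrix Fin.succ Fin.succ))
        (signedPfaffians (A.submatrix Fin.succ Fin.succ))) :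
    A.det = pfaffian (n := n + 1) A ^ 2 := by
  have hcol : (fun i => A (Fin.succ i) 0) = -fun j => A 0 (Fin.succ j) :=
    funext fun i => hA.apply_swap i.succ 0
  rw [det_succ_eq_sub_dotProduct_adjugate_mulVec, hadj, hA.diag_eq_zero, hcol, pfaffian_succ,
    Matrix.vecMulVec_mulVec, op_smul_eq_smul, dotProduct_smul, dotProduct_neg, smul_eq_mul,
    dotProduct_comm (signedPfaffians _)]
  ring

/-- Cayley's identity `det = Pf ^ 2` for the generic alternating matrix of size `2 * n`, from which
it follows for all alternating matrices of that size by specialization. -/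
def CayleyIdentity (n : ℕ) : Prop :=
  (genericAlternating (2 * n)).det = pfaffian (genericAlternating (2 * n)) ^ 2

namespace CayleyIdentity

lemma det_eq_pfaffian_sq (h : CayleyIdentity n) {A : Matrix (Fin (2 * n)) (Fin (2 * n)) R}
    (hA : IsAlternating A) : A.det = pfaffian A ^ 2 := by
  obtain ⟨f, rfl⟩ := hA.exists_map_genericAlternating_eq
  rw [pfaffian_map, ← map_pow, ← h, RingHom.map_det, RingHom.mapMatrix_apply]

lemma adjugate_apply_self (h : CayleyIdentity n)
    {A : Matrix (Fin (2 * n + 1)) (Fin (2 * n + 1)) R} (hA : IsAlternating A)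
    (i : Fin (2 * n + 1)) : A.adjugate i i = signedPfaffians A i ^ 2 := by
  rw [Matrix.adjugate_fin_succ_eq_det_submatrix, h.det_eq_pfaffian_sq (hA.submatrix _),
    signedPfaffians, mul_pow, ← pow_mul, mul_two]

lemma adjugate_upperOnes (h : CayleyIdentity n) (i j : Fin (2 * n + 1)) :
    (upperOnes (2 * n + 1)).adjugate i j =
      signedPfaffians (upperOnes (2 * n + 1)) i * signedPfaffians (upperOnes (2 * n + 1)) j := by
  set Y := signedPfaffians (upperOnes (2 * n + 1)) with hY
  have hker : upperOnes (2 * n + 1) *ᵥ Y = 0 := funext fun i => by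
    rw [hY, signedPfaffians_upperOnes, upperOnes_mulVec_neg_one_pow, if_neg (by simp),
      Pi.zero_apply]
  have hYj : Y j ≠ 0 := by simp [hY, signedPfaffians_upperOnes]
  refine mul_right_cancel₀ hYj ?_
  rw [adjugate_mul_comm_of_mulVec_eq_zero hker, h.adjugate_apply_self (isAlternating_upperOnes _)]
  ring

lemma adjugate_genericAlternating (h : CayleyIdentity n) (i j : Fin (2 * n + 1)) :
    (genericAlternating (2 * n + 1)).adjugate i j =
      signedPfaffians (genericAlternating (2 * n + 1)) i *
        signedPfaffians (genericAlternating (2 * n + 1)) j := by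
  set G := genericAlternating (2 * n + 1)
  set Y := signedPfaffians G
  have hG : IsAlternating G := isAlternating_genericAlternating _
  have hsq : G.adjugate i j ^ 2 = (Y i * Y j) ^ 2 := by
    rw [adjugate_apply_sq_of_transpose_eq_neg hG.transpose_eq_neg (by simp),
      h.adjugate_apply_self hG, h.adjugate_apply_self hG, mul_pow]
  refine (sq_eq_sq_iff_eq_or_eq_neg.1 hsq).resolve_right fun hneg => ?_
  obtain ⟨f, hf⟩ := (isAlternating_upperOnes (2 * n + 1)).exists_map_genericAlternating_eq
  have hfY (k : Fin (2 * n + 1)) : f (Y k) = (-1) ^ (k : ℕ) := by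
    rw [← signedPfaffians_map, hf, signedPfaffians_upperOnes]
  have hfadj : f (G.adjugate i j) = f (Y i * Y j) := by
    rw [← adjugate_map_apply, map_mul, ← signedPfaffians_map, ← signedPfaffians_map, hf,
      h.adjugate_upperOnes]
  have hzero : f (Y i * Y j) = 0 :=
    self_eq_neg.1 (by rw [← map_neg, ← hneg, hfadj])
  simp [hfY] at hzero

lemma adjugate_eq_vecMulVec (h : CayleyIdentity n)
    {A : Matrix (Fin (2 * n + 1)) (Fin (2 * n + 1)) R} (hA : IsAlternating A) :
    A.adjugate = Matrix.vecMulVec (signedPfaffians A) (signedPfaffians A) := by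
  obtain ⟨f, rfl⟩ := hA.exists_map_genericAlternating_eq
  ext i j
  rw [adjugate_map_apply, h.adjugate_genericAlternating, map_mul, Matrix.vecMulVec_apply,
    signedPfaffians_map, signedPfaffians_map]

end CayleyIdentity

theorem cayleyIdentity (n : ℕ) : CayleyIdentity n := by
  induction n with
  | zero => simp [CayleyIdentity, pfaffian, pfPerms]
  | succ n ih =>
    have hG : IsAlternating (genericAlternating (2 * n + 2)) := isAlternating_genericAlternating _
    exact hG.det_eq_pfaffian_sq_of_adjugate_eq (ih.adjugate_eq_vecMulVec (hG.submatrix Fin.succ))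

end Cayley

/-- For an alternating matrix `φ` of odd size `2n+1`, the adjugate of `φ` equals
`Y * Yᵀ`, where `Y i = (-1)^i * Pf(φ(i))` (zero-based indexing); in particular every
entry of `adj(φ)` is a product of two signed principal Pfaffians of size `2n`. -/
theorem adjugate_alternating_eq_vecMulVec_pfaffians
    {R : Type*} [CommRing R] {n : ℕ} (φ : Matrix (Fin (2*n+1)) (Fin (2*n+1)) R)
    (halt : φ.transpose = -φ) (hdiag : ∀ i, φ i i = 0) :
    φ.adjugate = Matrix.vecMulVec (fun (i : Fin (2*n+1)) => (-1 : R) ^ (i : ℕ) * pfaffian (φ.submatrix i.succAbove i.succAbove)) (fun (i : Fin (2*n+1)) => (-1 : R) ^ (i : ℕ) * pfaffian (φ.submatrix i.succAbove i.succAbove)) := by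
  exact (cayleyIdentity n).adjugate_eq_vecMulVec ⟨halt, hdiag⟩
end

section
/- A finite free complex F_• of length n over a commutative Noetherian ring A is acyclic if and only if its localization (F_•)_P is acyclic for every prime ideal P with depth(A_P) < n. -/
/-!
Suppose `F` fails to be acyclic and look at the failure of highest degree, say in degree `i + 1`.
The homology there is a nonzero module over a Noetherian ring, so it has an associated prime `P`:
some cycle `z` satisfies `P = {r | r • z is a boundary}`, and the class of `z` survives in the
localization at `P`, where it is killed by the maximal ideal. If `depth A_P < n` this contradicts
acyclicity of `F_P`. Otherwise `Extᵗ(κ(P), (F_j)_P) = 0` for all `t < n`, and running down the exact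
part of the complex gives `Extᵗ(κ(P), B) = 0` for `t ≤ i + 1`, where `B` is the module of boundaries
in degree `i + 1`. Hence there is no nonzero map from `κ(P)` to `(F_{i+1})_P / B`, although the
class of `z` provides one. This last step is the acyclicity lemma of Peskine and Szpiro.
-/

universe u v

open CategoryTheory Abelian RingTheory.Sequence

section ExtVanishing

variable {R : Type u} [CommRing R] [Small.{v} R]
  {K : Type v} [AddCommGroup K] [Module R K] {N : Type v} [AddCommGroup N] [Module R N]

variable (R K N) in
/-- `Extᵗ(K, N) = 0` for all `t < n`. For `K = R ⧸ I` over a Noetherian ring and `N` finitely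
generated with `I N ≠ N`, Rees' theorem identifies this with `depth_I N ≥ n`; unlike regular
sequences, it needs no finiteness and can be traced through short exact sequences. -/
def ExtVanishesBelow (n : ℕ) : Prop :=
  ∀ t < n, Subsingleton (Ext (ModuleCat.of R K) (ModuleCat.of R N) t)

namespace ExtVanishesBelow

lemma mono {m n : ℕ} (h : ExtVanishesBelow R K N n) (hmn : m ≤ n) : ExtVanishesBelow R K N m :=
  fun t ht ↦ h t (ht.trans_le hmn)

lemma of_subsingleton [Subsingleton N] (n : ℕ) : ExtVanishesBelow R K N n := fun t _ ↦ by
  have hN : 𝟙 (ModuleCat.of R N) = 0 :=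
    (Limits.IsZero.iff_id_eq_zero _).mp (ModuleCat.isZero_of_subsingleton _)
  refine subsingleton_of_forall_eq 0 fun e ↦ ?_
  rw [← e.comp_mk₀_id, hN, Ext.mk₀_zero, Ext.comp_zero]

lemma of_shortExact {L Q : Type v} [AddCommGroup L] [Module R L] [AddCommGroup Q] [Module R Q]
    {n : ℕ} (hL : ExtVanishesBelow R K L (n + 1)) (hN : ExtVanishesBelow R K N n)
    {f : L →ₗ[R] N} {g : N →ₗ[R] Q} (hfg : Function.Exact f g) (hf : Function.Injective f)
    (hg : Function.Surjective g) : ExtVanishesBelow R K Q n := fun t ht ↦ by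
  have hS := ModuleCat.shortComplex_shortExact
    (ModuleCat.shortComplexOfCompEqZero f g hfg.linearMap_comp_eq_zero) hfg hf hg
  refine subsingleton_of_forall_eq 0 fun e ↦ ?_
  obtain ⟨e', rfl⟩ := Ext.covariant_sequence_exact₃ (ModuleCat.of R K) hS e rfl
    ((hL (t + 1) (by omega)).elim _ _)
  rw [(hN t ht).elim e' 0, Ext.zero_comp]

/-- The long exact sequence makes `r` act injectively on `Extᵗ⁺¹(K, N)`, but `r` kills `K`. -/
lemma cons {r : R} (hK : r ∈ Module.annihilator R K) (hN : IsSMulRegular N r) {n : ℕ}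
    (h : ExtVanishesBelow R K (QuotSMulTop r N) n) : ExtVanishesBelow R K N (n + 1) := by
  rintro (_ | t) ht
  · have := IsSMulRegular.linearMap_subsingleton_of_mem_annihilator hN hK
    exact (Ext.addEquiv₀.trans ModuleCat.homAddEquiv).subsingleton
  · refine subsingleton_of_forall_eq 0 fun e ↦ ?_
    have he : e.comp (Ext.mk₀ (r • 𝟙 (ModuleCat.of R N))) (add_zero (t + 1)) = 0 :=
      DFunLike.congr_fun (congrArg AddCommGrpCat.Hom.hom
        (Ext.postcomp_smul_id_eq_zero_of_mem_annihilator (M := ModuleCat.of R N)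
          (N := ModuleCat.of R K) hK (t + 1))) e
    obtain ⟨e', rfl⟩ := Ext.covariant_sequence_exact₁ (ModuleCat.of R K)
      (IsSMulRegular.smulShortComplex_shortExact (M := ModuleCat.of R N) hN) e he rfl
    obtain rfl : e' = 0 := (h t (by omega)).elim _ _
    exact Ext.zero_comp ..

lemma of_isWeaklyRegular {rs : List R} (hrs : IsWeaklyRegular N rs)
    (hK : ∀ r ∈ rs, r ∈ Module.annihilator R K) : ExtVanishesBelow R K N rs.length := by
  induction rs generalizing N with
  | nil => exact fun t ht ↦ absurd ht t.not_lt_zero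
  | cons r rs ih =>
    rw [isWeaklyRegular_cons_iff] at hrs
    rw [List.forall_mem_cons] at hK
    exact cons hK.1 hrs.1 (ih hrs.2 hK.2)

lemma eq_zero_of_forall_smul_eq_zero {I : Ideal R}
    (h : ExtVanishesBelow R (Shrink.{v} (R ⧸ I)) N 1) {x : N} (hx : ∀ r ∈ I, r • x = 0) :
    x = 0 := by
  have := h 0 one_pos
  have hHom : Subsingleton (Shrink.{v} (R ⧸ I) →ₗ[R] N) :=
    (Ext.addEquiv₀.trans (ModuleCat.homAddEquiv (M := ModuleCat.of R (Shrink.{v} (R ⧸ I)))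
      (N := ModuleCat.of R N))).symm.subsingleton
  let φ : (R ⧸ I) →ₗ[R] N := Submodule.liftQ I (LinearMap.toSpanSingleton R N x) hx
  have hφ : φ = 0 := ((Shrink.linearEquiv R (R ⧸ I)).arrowCongr (.refl R N)).symm.injective
    (Subsingleton.elim _ _)
  rw [← one_smul R x]
  exact LinearMap.congr_fun hφ (Submodule.Quotient.mk 1)

end ExtVanishesBelow

end ExtVanishing

section AcyclicityLemma

variable {R : Type u} [CommRing R] [Small.{v} R] {K : Type v} [AddCommGroup K] [Module R K]
  {F : ℕ → Type v} [∀ j, AddCommGroup (F j)] [∀ j, Module R (F j)]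
  (d : ∀ j, F (j + 1) →ₗ[R] F j) {n : ℕ} (hF : ∀ j, n < j → Subsingleton (F j))
  (hK : ∀ j, ExtVanishesBelow R K (F j) j)

include hF hK

lemma extVanishesBelow_range {i : ℕ} (hex : ∀ j, i ≤ j → Function.Exact (d (j + 1)) (d j)) :
    ExtVanishesBelow R K (LinearMap.range (d i)) (i + 1) := by
  induction hk : n - i generalizing i with
  | zero =>
    have := hF (i + 1) (by omega)
    have : Subsingleton (LinearMap.range (d i)) := (d i).surjective_rangeRestrict.subsingleton
    exact .of_subsingleton _
  | succ k ih =>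
    refine (ih (fun j hj ↦ hex j (by omega)) (by omega)).of_shortExact (hK (i + 1))
      (f := (LinearMap.range (d (i + 1))).subtype) (g := (d i).rangeRestrict) ?_
      (Submodule.subtype_injective _) (d i).surjective_rangeRestrict
    rw [LinearMap.exact_iff, Submodule.range_subtype, LinearMap.ker_rangeRestrict,
      (hex i le_rfl).linearMap_ker_eq]

lemma extVanishesBelow_coker {i : ℕ} (hex : ∀ j, i ≤ j → Function.Exact (d (j + 1)) (d j)) :
    ExtVanishesBelow R K (F i ⧸ LinearMap.range (d i)) i :=
  (extVanishesBelow_range d hF hK hex).of_shortExact (hK i)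
    (LinearMap.exact_subtype_mkQ _) (Submodule.subtype_injective _) (Submodule.mkQ_surjective _)

end AcyclicityLemma

section Depth

/-- `depth R ≥ n` for a Noetherian local ring `R`, phrased through regular sequences. -/
def DepthAtLeast (R : Type u) [CommRing R] [IsLocalRing R] (n : ℕ) : Prop :=
  ∃ rs : List R, rs.length = n ∧ (∀ x ∈ rs, x ∈ IsLocalRing.maximalIdeal R) ∧ IsRegular R rs

open IsLocalRing

variable {R : Type u} [CommRing R] [IsLocalRing R] [Small.{v} R] {n : ℕ}

lemma DepthAtLeast.extVanishesBelow (h : DepthAtLeast R n) (N : Type v) [AddCommGroup N]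
    [Module R N] [Module.Flat R N] :
    ExtVanishesBelow R (Shrink.{v} (R ⧸ maximalIdeal R)) N n := by
  obtain ⟨rs, rfl, hmem, hreg⟩ := h
  have hN : IsWeaklyRegular N rs := ((TensorProduct.lid R N).isWeaklyRegular_congr rs).mp
    hreg.toIsWeaklyRegular.isWeaklyRegular_rTensor
  refine .of_isWeaklyRegular hN fun r hr ↦ ?_
  rw [(Shrink.linearEquiv R _).annihilator_eq, Ideal.annihilator_quotient]
  exact hmem r hr

lemma DepthAtLeast.mem_range_of_forall_smul_mem_range (h : DepthAtLeast R n)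
    {F : ℕ → Type v} [∀ j, AddCommGroup (F j)] [∀ j, Module R (F j)] [∀ j, Module.Flat R (F j)]
    (d : ∀ j, F (j + 1) →ₗ[R] F j) (hF : ∀ j, n < j → Subsingleton (F j)) {i : ℕ}
    (hex : ∀ j, i < j → Function.Exact (d (j + 1)) (d j)) {z : F (i + 1)}
    (hz : ∀ r ∈ maximalIdeal R, r • z ∈ LinearMap.range (d (i + 1))) :
    z ∈ LinearMap.range (d (i + 1)) := by
  have hK (j : ℕ) : ExtVanishesBelow R (Shrink.{v} (R ⧸ maximalIdeal R)) (F j) j := by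
    rcases le_or_gt j n with hj | hj
    · exact (h.extVanishesBelow (F j)).mono hj
    · have := hF j hj
      exact .of_subsingleton j
  rw [← Submodule.Quotient.mk_eq_zero]
  refine ((extVanishesBelow_coker d hF hK hex).mono i.succ_pos).eq_zero_of_forall_smul_eq_zero
    fun r hr ↦ ?_
  rw [← Submodule.Quotient.mk_smul, Submodule.Quotient.mk_eq_zero]
  exact hz r hr

end Depth

section LocalGlobal

variable {A : Type u} [CommRing A] {M : Type v} [AddCommGroup M] [Module A M]

/-- The primes that matter are the associated primes of `(p ⊔ q) / p`. -/
lemma submodule_le_of_forall_isPrime [IsNoetherianRing A] {p q : Submodule A M}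
    (h : ∀ (P : Ideal A) [P.IsPrime], ∀ z ∈ q, (∀ r ∈ P, r • z ∈ p) →
      ∃ s ∈ P.primeCompl, s • z ∈ p) :
    q ≤ p := by
  rw [← Submodule.comap_subtype_eq_top, ← Submodule.Quotient.subsingleton_iff]
  by_contra hne
  rw [not_subsingleton_iff_nontrivial] at hne
  obtain ⟨P, hP⟩ := associatedPrimes.nonempty A (q ⧸ p.comap q.subtype)
  obtain ⟨hprime, x, hx⟩ := isAssociatedPrime_iff.mp hP
  obtain ⟨z, rfl⟩ := Submodule.Quotient.mk_surjective _ x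
  have hPz (r : A) : r ∈ P ↔ r • (z : M) ∈ p := by
    rw [hx, Submodule.mem_colon_singleton, Submodule.mem_bot, ← Submodule.Quotient.mk_smul,
      Submodule.Quotient.mk_eq_zero, Submodule.mem_comap, Submodule.subtype_apply,
      Submodule.coe_smul]
  obtain ⟨s, hs, hsz⟩ := h P z z.2 fun r hr ↦ (hPz r).mp hr
  exact hs ((hPz s).mpr hsz)

variable {M' : Type*} [AddCommGroup M'] [Module A M'] (S : Submonoid A) {f : M' →ₗ[A] M} {z : M}

open LocalizedModule

lemma mkLinearMap_mem_range_map_iff :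
    mkLinearMap S M z ∈ LinearMap.range (LocalizedModule.map S f) ↔
      ∃ s ∈ S, s • z ∈ LinearMap.range f := by
  constructor
  · rintro ⟨y, hy⟩
    induction y using LocalizedModule.induction_on with | _ y t
    rw [LocalizedModule.map_mk, mkLinearMap_apply, LocalizedModule.mk_eq] at hy
    obtain ⟨u, hu⟩ := hy
    refine ⟨u * t, (u * t).2, (u : A) • y, ?_⟩
    rw [one_smul] at hu
    rw [map_smul, mul_smul]
    exact hu
  · rintro ⟨s, hs, y, hy⟩
    refine ⟨LocalizedModule.mk y ⟨s, hs⟩, ?_⟩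
    rw [LocalizedModule.map_mk, hy, mkLinearMap_apply, LocalizedModule.mk_eq]
    exact ⟨1, by simp⟩

lemma smul_mkLinearMap_mem_range_map {I : Ideal A} (h : ∀ r ∈ I, r • z ∈ LinearMap.range f) :
    ∀ r ∈ I.map (algebraMap A (Localization S)),
      r • mkLinearMap S M z ∈ LinearMap.range (LocalizedModule.map S f) := by
  have hle : I.map (algebraMap A (Localization S)) ≤
      (LinearMap.range (LocalizedModule.map S f)).colon {mkLinearMap S M z} := by
    refine Ideal.map_le_iff_le_comap.mpr fun r hr ↦ ?_
    obtain ⟨y, hy⟩ := h r hr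
    rw [Ideal.mem_comap, Submodule.mem_colon_singleton]
    refine ⟨mkLinearMap S M' y, ?_⟩
    rw [algebraMap_smul, ← map_smul, ← hy]
    exact IsLocalizedModule.map_apply _ _ _ _ _
  exact fun r hr ↦ Submodule.mem_colon_singleton.mp (hle hr)

end LocalGlobal

theorem buchsbaum_eisenbud_acyclicity_criterion_general
    {A : Type u} [CommRing A] [IsNoetherianRing A] (n : ℕ)
    {F : ℕ → Type v} [∀ i, AddCommGroup (F i)] [∀ i, Module A (F i)] [∀ i, Module.Flat A (F i)]
    (hF : ∀ i, n < i → Subsingleton (F i)) (d : ∀ i, F (i + 1) →ₗ[A] F i)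
    (hd : ∀ i, d i ∘ₗ d (i + 1) = 0) :
    (∀ i, Function.Exact (d (i + 1)) (d i)) ↔
      ∀ (P : Ideal A) [P.IsPrime], ¬ DepthAtLeast (Localization.AtPrime P) n →
        ∀ i, Function.Exact (LocalizedModule.map P.primeCompl (d (i + 1)))
          (LocalizedModule.map P.primeCompl (d i)) := by
  refine ⟨fun h P _ _ i ↦ LocalizedModule.map_exact _ _ _ (h i), fun h i ↦ ?_⟩
  induction hk : n - i using Nat.strong_induction_on generalizing i with | _ k ih =>
  rcases le_or_gt n i with hni | hin
  · have := hF (i + 1) (by omega)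
    exact fun z ↦ ⟨fun _ ↦ ⟨0, Subsingleton.elim _ _⟩, fun _ ↦ by simp [Subsingleton.elim z 0]⟩
  have hex (j : ℕ) (hj : i < j) : Function.Exact (d (j + 1)) (d j) := ih _ (by omega) j rfl
  refine LinearMap.exact_iff.mpr (le_antisymm ?_ (LinearMap.range_le_ker_iff.mpr (hd i)))
  refine submodule_le_of_forall_isPrime fun P _ z hz hPz ↦ ?_
  rw [← mkLinearMap_mem_range_map_iff]
  by_cases hP : DepthAtLeast (Localization.AtPrime P) n
  · refine hP.mem_range_of_forall_smul_mem_range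
      (F := fun j ↦ LocalizedModule P.primeCompl (F j))
      (fun j ↦ LocalizedModule.map P.primeCompl (d j)) ?_
      (fun j hj ↦ LocalizedModule.map_exact _ _ _ (hex j hj)) ?_
    · intro j hj
      have := hF j hj
      infer_instance
    · rw [← Localization.AtPrime.map_eq_maximalIdeal]
      exact smul_mkLinearMap_mem_range_map P.primeCompl hPz
  · refine (h P hP i _).mp ?_
    exact (IsLocalizedModule.map_apply _ _ _ _ _).trans (by rw [LinearMap.mem_ker.mp hz, map_zero])

section Matrix

variable {A : Type u} [CommRing A] (S : Submonoid A) {l m n : Type*} [Finite l] [Fintype m]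
  [Fintype n]

instance isLocalizedModule_compLeft {M M' : Type*} [AddCommGroup M] [Module A M]
    [AddCommGroup M'] [Module A M'] (f : M →ₗ[A] M') [IsLocalizedModule S f] :
    IsLocalizedModule S (f.compLeft l) :=
  IsLocalizedModule.pi S fun _ ↦ f

lemma map_compLeft_mulVecLin {B : Type*} [CommRing B] [Algebra A B] [IsLocalization S B]
    (N : Matrix l m A) :
    IsLocalizedModule.map S ((Algebra.linearMap A B).compLeft m)
      ((Algebra.linearMap A B).compLeft l) N.mulVecLin =
      (N.map (algebraMap A B)).mulVecLin.restrictScalars A := by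
  refine IsLocalizedModule.linearMap_ext S ((Algebra.linearMap A B).compLeft m)
    ((Algebra.linearMap A B).compLeft l) ?_
  rw [IsLocalizedModule.map_comp]
  ext v i
  exact RingHom.map_mulVec (algebraMap A B) N _ i

lemma range_map_mulVecLin_eq_ker_iff (N : Matrix l m A) (N' : Matrix m n A) :
    LinearMap.range (N'.map (algebraMap A (Localization S))).mulVecLin =
        LinearMap.ker (N.map (algebraMap A (Localization S))).mulVecLin ↔
      Function.Exact (LocalizedModule.map S N'.mulVecLin) (LocalizedModule.map S N.mulVecLin) := by
  rw [eq_comm, ← LinearMap.exact_iff]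
  have h := Function.Exact.iff_of_ladder_linearEquiv (IsLocalizedModule.map_iso_commute S
    ((Algebra.linearMap A (Localization S)).compLeft n)
    ((Algebra.linearMap A (Localization S)).compLeft m) N'.mulVecLin)
    (IsLocalizedModule.map_iso_commute S _
      ((Algebra.linearMap A (Localization S)).compLeft l) N.mulVecLin)
  rwa [map_compLeft_mulVecLin, map_compLeft_mulVecLin] at h

end Matrix

/-- The Buchsbaum–Eisenbud acyclicity criterion: a finite free complex
`0 → F_n → ... → F_1 → F_0` (encoded by ranks `rk` vanishing above `n` and matrices
`M i : F_{i+1} → F_i` with `M i * M (i+1) = 0`) over a commutative Noetherian ring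
`A` is acyclic (exact in all positive homological degrees) if and only if its
localization at every prime `P` such that `depth (A_P) < n` (i.e. the maximal ideal
of `A_P` contains no regular sequence of length `n`) is acyclic. -/
theorem buchsbaum_eisenbud_acyclicity_criterion
    {A : Type} [CommRing A] [IsNoetherianRing A] (n : ℕ) (rk : ℕ → ℕ)
    (hrk : ∀ i, n < i → rk i = 0)
    (M : ∀ i : ℕ, Matrix (Fin (rk i)) (Fin (rk (i+1))) A)
    (hcomplex : ∀ i, M i * M (i+1) = 0) :
    (∀ i : ℕ, LinearMap.range (M (i+1)).mulVecLin = LinearMap.ker (M i).mulVecLin)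
    ↔ ∀ (P : Ideal A) [P.IsPrime],
        (¬ ∃ rs : List (Localization.AtPrime P), rs.length = n ∧
            (∀ x ∈ rs, x ∈ IsLocalRing.maximalIdeal (Localization.AtPrime P)) ∧
            RingTheory.Sequence.IsRegular (Localization.AtPrime P) rs) →
        ∀ i : ℕ,
          LinearMap.range ((M (i+1)).map (algebraMap A (Localization.AtPrime P))).mulVecLin
            = LinearMap.ker ((M i).map (algebraMap A (Localization.AtPrime P))).mulVecLin := by
  have hF (i : ℕ) (hi : n < i) : Subsingleton (Fin (rk i) → A) := by rw [hrk i hi]; infer_instance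
  have hd (i : ℕ) : (M i).mulVecLin ∘ₗ (M (i + 1)).mulVecLin = 0 := by
    rw [← Matrix.mulVecLin_mul, hcomplex, Matrix.mulVecLin_zero]
  simpa only [range_map_mulVecLin_eq_ker_iff, @eq_comm (Submodule A _), ← LinearMap.exact_iff,
    DepthAtLeast] using
    buchsbaum_eisenbud_acyclicity_criterion_general n hF (fun i ↦ (M i).mulVecLin) hd
end
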